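/- For every n ≥ 0, the matrix AM_n is invertible over ℚ, (AM_n^{−1})_{I,J} ≠ 0 if and only if J ⊆ I, and for J ⊆ I, (AM_n^{−1})_{I,J} = (−1)^{|J|} · ∏_{k=1}^{t} (1/(|I_k|+1)!) · ∏_{i ∈ I_k ∩ J} (max(I_k) − i + 1), where I_1, …, I_t are the runs of I. Moreover: (i) each nonzero entry of AM_n^{−1} is the reciprocal of an integer up to sign; (ii) in each row of AM_n^{−1} the sum of absolute values of all entries equals 1; (iii) in row I, the first entry (AM_n^{−1})_{I,∅} = ∏_{k=1}^{t} 1/(|I_k|+1)! divides every nonzero entry of the row, and the diagonal entry (AM_n^{−1})_{I,I} = (−1)^{|I|} ∏_{k=1}^{t} 1/(|I_k|+1) is divisible by every nonzero entry of the row (a rational r divides a rational s when s/r is an integer). -/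

import Mathlib

/-!
Write `W n k` for the rational matrix `(A_n + k B_n) M_n`, so that `AM_n = W n 0`. Splitting the
subsets of `[n+1]` according to whether they contain `n+1` gives the block recursion
`W (n+1) k = [[(k+1) W n 0, 0], [W n 0, -W n (k+1)]]` (`W_con`): the family indexed by `k` is
closed under the recursion although `A_n M_n` alone is not. Inverting blockwise yields
`V (n+1) k = [[V n 0 / (k+1), 0], [V n (k+1) / (k+1), -V n (k+1)]]` with `V n k * W n k = 1`
(`V_mul_W`). The support, the shape of the entries, the row sums (`1 / (k+1)` for general `k`) and
both divisibility claims follow from this recursion by induction on `n`.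

For the product formula, `k` is read as a block of `k` consecutive elements already found directly
above `[n]`: if `F S T` is the product over the runs of `S`, then
`V n k I J = (-1)^|J| k! F (I ∪ {n+1, …, n+k}) J` (`V_eq_F`). When `n+1 ∈ I` the block grows by one
element, and membership of `n+1` in `J` multiplies `F` by the distance to the top of the run plus
one, which is `k+1` (`F_insert`, `max_runOf_top`). When `n+1 ∉ I` the block is a run of its own and
contributes `1/(k+1)!` (`F_union`). The diagonal entries are computed in the same way (`V_diag`).
-/

open Finset

/-- Restriction of a subset of `Fin (n+1)` to `Fin n` (forgetting the top element). -/
def resSet {n : ℕ} (I : Finset (Fin (n + 1))) : Finset (Fin n) :=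
  Finset.univ.filter (fun j : Fin n => Fin.castSucc j ∈ I)

mutual
  /-- The matrix `A_n`, rows/columns indexed by subsets of `{1,…,n}` (element `j`
  of `[n]` corresponds to `j-1 : Fin n`, i.e. anti-lexicographic/binary order). -/
  def Amat : (n : ℕ) → Matrix (Finset (Fin n)) (Finset (Fin n)) ℤ
    | 0 => Matrix.of fun _ _ => 1
    | n + 1 => Matrix.of fun I J =>
        if Fin.last n ∈ I then
          if Fin.last n ∈ J then - Bmat n (resSet I) (resSet J)
          else Amat n (resSet I) (resSet J)
        else Amat n (resSet I) (resSet J)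
  /-- The matrix `B_n`. -/
  def Bmat : (n : ℕ) → Matrix (Finset (Fin n)) (Finset (Fin n)) ℤ
    | 0 => Matrix.of fun _ _ => 1
    | n + 1 => Matrix.of fun I J =>
        if Fin.last n ∈ I then
          if Fin.last n ∈ J then - Bmat n (resSet I) (resSet J)
          else 0
        else Amat n (resSet I) (resSet J)
end

/-- The Walsh-Hadamard matrix `H_n`. -/
def Hmat : (n : ℕ) → Matrix (Finset (Fin n)) (Finset (Fin n)) ℤ
  | 0 => Matrix.of fun _ _ => 1
  | n + 1 => Matrix.of fun I J =>
      if Fin.last n ∈ I ∧ Fin.last n ∈ J then - Hmat n (resSet I) (resSet J)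
      else Hmat n (resSet I) (resSet J)

/-- The Möbius matrix `M_n` of the boolean lattice. -/
def Mobmat (n : ℕ) : Matrix (Finset (Fin n)) (Finset (Fin n)) ℤ :=
  Matrix.of fun I J => if I ⊆ J then (-1) ^ (J \ I).card else 0

/-- The zeta matrix `Z_n` of the boolean lattice. -/
def Zetamat (n : ℕ) : Matrix (Finset (Fin n)) (Finset (Fin n)) ℤ :=
  Matrix.of fun I J => if I ⊆ J then 1 else 0

/-- The subset of `[n] = {1,…,n}` corresponding to a subset of `Fin n`. -/
def natSet {n : ℕ} (I : Finset (Fin n)) : Finset ℕ := Finset.image (fun j : Fin n => (j : ℕ) + 1) I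

/-- The ordinal number of a subset in the anti-lexicographic order. -/
def ordFin {n : ℕ} (I : Finset (Fin n)) : ℕ := ∑ j ∈ I, 2 ^ (j : ℕ)

/-- The run (maximal interval of consecutive integers) of `I` containing `j`
(empty if `j ∉ I`). -/
def runOf (I : Finset ℕ) (j : ℕ) : Finset ℕ :=
  I.filter (fun i => ∀ k ∈ Finset.Icc (min i j) (max i j), k ∈ I)

/-- The set of runs (maximal intervals of consecutive integers) of `I`. -/
def runsOf (I : Finset ℕ) : Finset (Finset ℕ) := I.image (runOf I)

/-- `P` is a prefix of the interval `R`: it consists of an initial segment of `R`. -/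
def IsPrefixOf (P R : Finset ℕ) : Prop :=
  P ⊆ R ∧ ∀ i ∈ R, ∀ j ∈ P, i ≤ j → i ∈ P


/-! ### Subsets of `[n+1]` in terms of subsets of `[n]` -/

/-- The subset of `Fin (n+1)` with restriction `I` to `Fin n`, containing the top element
exactly when `b` is true. -/
def con {n : ℕ} (b : Bool) (I : Finset (Fin n)) : Finset (Fin (n + 1)) :=
  I.map Fin.castSuccEmb ∪ if b then {Fin.last n} else ∅

section con
variable {n : ℕ} (b c : Bool) (I J : Finset (Fin n))

@[simp] lemma last_mem_con : Fin.last n ∈ con b I ↔ b = true := by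
  cases b <;> simp [con]

@[simp] lemma castSucc_mem_con (i : Fin n) : i.castSucc ∈ con b I ↔ i ∈ I := by
  cases b <;> simp [con]

@[simp] lemma resSet_con : resSet (con b I) = I := by
  ext i; simp [resSet]

lemma con_resSet (K : Finset (Fin (n + 1))) : con (decide (Fin.last n ∈ K)) (resSet K) = K := by
  ext j
  refine Fin.lastCases ?_ (fun i => ?_) j
  · simp
  · simp [resSet]

lemma exists_con (K : Finset (Fin (n + 1))) : ∃ b I, K = con b I :=
  ⟨_, _, (con_resSet K).symm⟩

lemma con_subset : con b I ⊆ con c J ↔ (b = true → c = true) ∧ I ⊆ J := by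
  constructor
  · intro h
    refine ⟨fun hb => ?_, fun i hi => ?_⟩
    · simpa using h (show Fin.last n ∈ con b I by simpa using hb)
    · simpa using h (show i.castSucc ∈ con b I by simpa using hi)
  · rintro ⟨h1, h2⟩ j
    refine Fin.lastCases ?_ (fun i => ?_) j
    · simpa using h1
    · simpa using @h2 i

lemma con_sdiff : con c J \ con b I = con (c && !b) (J \ I) := by
  ext j
  refine Fin.lastCases ?_ (fun i => ?_) j <;> simp

lemma con_empty : con false (∅ : Finset (Fin n)) = ∅ := by
  ext j
  refine Fin.lastCases ?_ (fun i => ?_) j <;> simp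

lemma con_eq_con : con b I = con c J ↔ b = c ∧ I = J := by
  constructor
  · intro h
    refine ⟨?_, by simpa using congrArg resSet h⟩
    have : Fin.last n ∈ con b I ↔ Fin.last n ∈ con c J := by rw [h]
    rw [last_mem_con, last_mem_con] at this
    exact Bool.eq_iff_iff.2 this
  · rintro ⟨rfl, rfl⟩; rfl

lemma card_con : (con b I).card = I.card + if b then 1 else 0 := by
  have hd : Disjoint (I.map Fin.castSuccEmb) (if b then {Fin.last n} else ∅) := by
    rw [disjoint_left]
    intro x hx
    obtain ⟨i, -, rfl⟩ := mem_map.1 hx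
    cases b
    · exact notMem_empty _
    · exact fun h => Fin.castSucc_ne_last i (mem_singleton.1 h)
  rw [con, card_union_of_disjoint hd, card_map]
  cases b <;> rfl

lemma natSet_con : natSet (con b I) = natSet I ∪ if b then {n + 1} else ∅ := by
  ext x
  simp only [natSet, mem_image, mem_union]
  constructor
  · rintro ⟨j, hj, rfl⟩
    induction j using Fin.lastCases with
    | last => right; simp_all
    | cast i => left; exact ⟨i, by simpa using hj, by simp⟩
  · rintro (⟨i, hi, rfl⟩ | h)
    · exact ⟨i.castSucc, by simpa using hi, by simp⟩
    · cases b
      · simp at h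
      · exact ⟨Fin.last n, by simp, by simpa [eq_comm] using h⟩

lemma sum_con {M : Type*} [AddCommMonoid M] (f : Finset (Fin (n + 1)) → M) :
    ∑ K, f K = ∑ I, f (con false I) + ∑ I, f (con true I) := by
  have e : ∑ K, f K = ∑ p : Bool × Finset (Fin n), f (con p.1 p.2) := by
    refine (Fintype.sum_bijective (fun p : Bool × Finset (Fin n) => con p.1 p.2)
      ⟨?_, ?_⟩ _ _ fun _ => rfl).symm
    · rintro ⟨b, I⟩ ⟨c, J⟩ h
      simpa [con_eq_con] using h
    · intro K
      exact ⟨(_, _), con_resSet K⟩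
  rw [e, Fintype.sum_prod_type, Fintype.sum_bool, add_comm]

end con

lemma le_of_mem_natSet {n : ℕ} {I : Finset (Fin n)} {x : ℕ} (h : x ∈ natSet I) : x ≤ n := by
  simp only [natSet, mem_image] at h
  obtain ⟨j, -, rfl⟩ := h
  omega

lemma natSet_fin_zero (I : Finset (Fin 0)) : natSet I = ∅ := by
  simp [natSet, Finset.eq_empty_of_isEmpty I]

/-! ### The inverse of `(A_n + k B_n) M_n` -/

lemma Mobmat_con {n : ℕ} (b c : Bool) (I J : Finset (Fin n)) :
    Mobmat (n + 1) (con b I) (con c J) =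
      if b then (if c then Mobmat n I J else 0)
      else (if c then - Mobmat n I J else Mobmat n I J) := by
  cases b <;> cases c <;>
    simp [Mobmat, con_subset, con_sdiff, card_con, pow_succ, apply_ite Neg.neg]

lemma Amat_mul_con {n : ℕ} (b c : Bool) (I J : Finset (Fin n)) :
    (Amat (n + 1) * Mobmat (n + 1)) (con b I) (con c J) =
      if b then (if c then - ((Amat n * Mobmat n) I J + (Bmat n * Mobmat n) I J)
        else (Amat n * Mobmat n) I J)
      else (if c then 0 else (Amat n * Mobmat n) I J) := by
  rw [Matrix.mul_apply, sum_con]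
  cases b <;> cases c <;>
    simp [Amat, Mobmat_con, Matrix.mul_apply, sum_neg_distrib]
  ring

lemma Bmat_mul_con {n : ℕ} (b c : Bool) (I J : Finset (Fin n)) :
    (Bmat (n + 1) * Mobmat (n + 1)) (con b I) (con c J) =
      if b then (if c then - (Bmat n * Mobmat n) I J else 0)
      else (if c then 0 else (Amat n * Mobmat n) I J) := by
  rw [Matrix.mul_apply, sum_con]
  cases b <;> cases c <;>
    simp [Bmat, Mobmat_con, Matrix.mul_apply, sum_neg_distrib]

/-- The rational matrix `(A_n + k B_n) M_n`. -/
def W (n k : ℕ) : Matrix (Finset (Fin n)) (Finset (Fin n)) ℚ :=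
  Matrix.of fun I J =>
    (((Amat n * Mobmat n) I J : ℤ) : ℚ) + k * (((Bmat n * Mobmat n) I J : ℤ) : ℚ)

lemma W_con {n : ℕ} (k : ℕ) (b c : Bool) (I J : Finset (Fin n)) :
    W (n + 1) k (con b I) (con c J) =
      if b then (if c then - W n (k + 1) I J else W n 0 I J)
      else (if c then 0 else (k + 1) * W n 0 I J) := by
  cases b <;> cases c <;> simp [W, Amat_mul_con, Bmat_mul_con] <;> ring

/-- The inverse of `W n k`, by block recursion: splitting off the top element,
`W (n+1) k = [[(k+1) W n 0, 0], [W n 0, -W n (k+1)]]`, so the inverse is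
`[[V n 0 / (k+1), 0], [V n (k+1) / (k+1), -V n (k+1)]]`. -/
def V : (n k : ℕ) → Matrix (Finset (Fin n)) (Finset (Fin n)) ℚ
  | 0, k => Matrix.of fun _ _ => 1 / (k + 1)
  | n + 1, k => Matrix.of fun I J =>
      if Fin.last n ∈ I then
        if Fin.last n ∈ J then - V n (k + 1) (resSet I) (resSet J)
        else V n (k + 1) (resSet I) (resSet J) / (k + 1)
      else if Fin.last n ∈ J then 0 else V n 0 (resSet I) (resSet J) / (k + 1)

lemma V_con {n : ℕ} (k : ℕ) (b c : Bool) (I J : Finset (Fin n)) :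
    V (n + 1) k (con b I) (con c J) =
      if b then (if c then - V n (k + 1) I J else V n (k + 1) I J / (k + 1))
      else (if c then 0 else V n 0 I J / (k + 1)) := by
  simp [V]

lemma cast_succ_ne (k : ℕ) : (k : ℚ) + 1 ≠ 0 := by positivity

lemma V_mul_W (n k : ℕ) : V n k * W n k = 1 := by
  induction n generalizing k with
  | zero =>
    ext I J
    obtain rfl := Finset.eq_empty_of_isEmpty I
    obtain rfl := Finset.eq_empty_of_isEmpty J
    have hk := cast_succ_ne k
    have hu : (univ : Finset (Finset (Fin 0))) = {∅} := rfl
    rw [Matrix.mul_apply, hu, sum_singleton]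
    simp [V, W, Amat, Bmat, Mobmat, Matrix.mul_apply]
    field_simp
    ring
  | succ n ih =>
    have hk := cast_succ_ne k
    have h0 := ih 0
    have h1 := ih (k + 1)
    ext K L
    obtain ⟨b, I, rfl⟩ := exists_con K
    obtain ⟨c, J, rfl⟩ := exists_con L
    have e0 : ∑ x, V n 0 I x * W n 0 x J = (1 : Matrix _ _ ℚ) I J := by
      rw [← h0, Matrix.mul_apply]
    have e1 : ∑ x, V n (k + 1) I x * W n (k + 1) x J = (1 : Matrix _ _ ℚ) I J := by
      rw [← h1, Matrix.mul_apply]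
    rw [Matrix.mul_apply, sum_con]
    simp only [V_con, W_con]
    rw [Matrix.one_apply] at e0 e1 ⊢
    simp only [con_eq_con]
    cases b <;> cases c
    · rw [← sum_add_distrib]
      simpa [div_mul_eq_mul_div, mul_left_comm _ ((k : ℚ) + 1), mul_div_cancel₀ _ hk] using e0
    · simp
    · rw [← sum_add_distrib]
      simp [div_mul_eq_mul_div, mul_left_comm _ ((k : ℚ) + 1), mul_div_cancel₀ _ hk]
    · simpa using e1

/-! ### Consequences of the recursion -/

lemma V_ne_zero_iff (n k : ℕ) (I J : Finset (Fin n)) : V n k I J ≠ 0 ↔ J ⊆ I := by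
  induction n generalizing k with
  | zero =>
    simp [V, cast_succ_ne, Finset.eq_empty_of_isEmpty J]
  | succ n ih =>
    obtain ⟨b, I, rfl⟩ := exists_con I
    obtain ⟨c, J, rfl⟩ := exists_con J
    have h0 := ih 0 I J
    have h1 := ih (k + 1) I J
    have hk := cast_succ_ne k
    rw [V_con, con_subset]
    cases b <;> cases c <;> simp_all

lemma abs_V (n k : ℕ) (I J : Finset (Fin n)) (h : J ⊆ I) :
    ∃ m : ℕ, 0 < m ∧ |V n k I J| = 1 / (m : ℚ) := by
  induction n generalizing k with
  | zero =>
    refine ⟨k + 1, k.succ_pos, ?_⟩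
    have : (0 : ℚ) < k + 1 := by positivity
    simp [V, abs_of_pos this]
  | succ n ih =>
    obtain ⟨b, I, rfl⟩ := exists_con I
    obtain ⟨c, J, rfl⟩ := exists_con J
    rw [con_subset] at h
    obtain ⟨m0, p0, h0⟩ := ih 0 I J h.2
    obtain ⟨m1, p1, h1⟩ := ih (k + 1) I J h.2
    have hk : |(k : ℚ) + 1| = k + 1 := abs_of_pos (by positivity)
    rw [V_con]
    cases b <;> cases c
    · exact ⟨m0 * (k + 1), by positivity, by simp [abs_div, h0, hk]; field_simp⟩
    · simp at h
    · exact ⟨m1 * (k + 1), by positivity, by simp [abs_div, h1, hk]; field_simp⟩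
    · exact ⟨m1, p1, by simpa using h1⟩

lemma sum_abs_V (n k : ℕ) (I : Finset (Fin n)) : ∑ J, |V n k I J| = 1 / ((k : ℚ) + 1) := by
  induction n generalizing k with
  | zero =>
    have : (0 : ℚ) < k + 1 := by positivity
    simp [V, abs_of_pos this]
  | succ n ih =>
    obtain ⟨b, I, rfl⟩ := exists_con I
    have h0 := ih 0 I
    have h1 := ih (k + 1) I
    have hk : |(k : ℚ) + 1| = k + 1 := abs_of_pos (by positivity)
    rw [sum_con]
    cases b
    · simp [V_con, abs_div, ← sum_div, h0, hk]
    · simp [V_con, abs_div, ← sum_div, h1, hk]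
      field_simp
      ring

lemma V_dvd_first (n k : ℕ) (I J : Finset (Fin n)) (h : J ⊆ I) :
    ∃ z : ℤ, V n k I J = z * V n k I ∅ := by
  induction n generalizing k with
  | zero => exact ⟨1, by simp [V]⟩
  | succ n ih =>
    obtain ⟨b, I, rfl⟩ := exists_con I
    obtain ⟨c, J, rfl⟩ := exists_con J
    rw [con_subset] at h
    obtain ⟨z0, h0⟩ := ih 0 I J h.2
    obtain ⟨z1, h1⟩ := ih (k + 1) I J h.2
    have hk := cast_succ_ne k
    rw [← con_empty, V_con, V_con]
    cases b <;> cases c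
    · exact ⟨z0, by simp [h0]; ring⟩
    · simp at h
    · exact ⟨z1, by simp [h1]; ring⟩
    · exact ⟨-z1 * (k + 1), by simp [h1]; field_simp⟩

lemma V_diag_dvd (n k : ℕ) (I J : Finset (Fin n)) (h : J ⊆ I) :
    ∃ z : ℤ, V n k I I = z * V n k I J := by
  induction n generalizing k with
  | zero => exact ⟨1, by simp [V]⟩
  | succ n ih =>
    obtain ⟨b, I, rfl⟩ := exists_con I
    obtain ⟨c, J, rfl⟩ := exists_con J
    rw [con_subset] at h
    obtain ⟨z0, h0⟩ := ih 0 I J h.2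
    obtain ⟨z1, h1⟩ := ih (k + 1) I J h.2
    have hk := cast_succ_ne k
    rw [V_con, V_con]
    cases b <;> cases c
    · exact ⟨z0, by simp [h0]; ring⟩
    · simp at h
    · exact ⟨-z1 * (k + 1), by simp [h1]; field_simp⟩
    · exact ⟨z1, by simp [h1]⟩

/-! ### Runs -/

lemma mem_runOf_self {S : Finset ℕ} {j : ℕ} (h : j ∈ S) : j ∈ runOf S j := by
  simp only [runOf, mem_filter, mem_Icc]
  refine ⟨h, fun k hk => ?_⟩
  have : k = j := by omega
  rwa [this]

/-- Two elements lie in the same run iff one lies in the run of the other: the relation is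
symmetric and transitive. -/
lemma runOf_eq_iff {S : Finset ℕ} {i j : ℕ} (hi : i ∈ S) :
    runOf S i = runOf S j ↔ i ∈ runOf S j := by
  constructor
  · intro h
    rw [← h]
    exact mem_runOf_self hi
  · intro h
    simp only [runOf, mem_filter, mem_Icc] at h
    ext x
    simp only [runOf, mem_filter, mem_Icc]
    refine and_congr_right fun _ => ⟨fun hx k hk => ?_, fun hx k hk => ?_⟩
    · by_cases hc : min x i ≤ k ∧ k ≤ max x i
      · exact hx k hc
      · exact h.2 k (by omega)
    · by_cases hc : min x j ≤ k ∧ k ≤ max x j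
      · exact hx k hc
      · exact h.2 k (by omega)

/-- The runs of `S` partition `S`, so a product over all pairs of a run and an element of it
lying in `T` is a product over `S ∩ T`. -/
lemma prod_runs (S T : Finset ℕ) (g : Finset ℕ → ℕ → ℚ) :
    ∏ R ∈ runsOf S, ∏ i ∈ R ∩ T, g R i = ∏ i ∈ S ∩ T, g (runOf S i) i := by
  rw [← prod_fiberwise_of_maps_to (s := S ∩ T) (t := runsOf S) (g := runOf S)
    (fun i hi => mem_image_of_mem _ (mem_inter.1 hi).1)]
  refine prod_congr rfl fun R hR => ?_
  obtain ⟨j, hj, rfl⟩ := mem_image.1 hR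
  have hset : runOf S j ∩ T = (S ∩ T).filter fun i => runOf S i = runOf S j := by
    ext i
    simp only [mem_inter, mem_filter]
    constructor
    · rintro ⟨h1, h2⟩
      have hi : i ∈ S := (mem_filter.1 h1).1
      exact ⟨⟨hi, h2⟩, (runOf_eq_iff hi).2 h1⟩
    · rintro ⟨⟨h1, h2⟩, h3⟩
      exact ⟨(runOf_eq_iff h1).1 h3, h2⟩
  rw [hset]
  refine prod_congr rfl fun i hi => ?_
  rw [(mem_filter.1 hi).2]

/-- An interval lying above `S` and separated from it by a gap is a new run, and the runs of `S`
are unchanged. The hypothesis `f ∅ = 1` covers the empty interval. -/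
lemma prod_runs_union (S : Finset ℕ) (n k : ℕ) (hS : ∀ x ∈ S, x ≤ n) (f : Finset ℕ → ℚ)
    (hf : f ∅ = 1) :
    ∏ R ∈ runsOf (S ∪ Icc (n + 2) (n + 1 + k)), f R =
      (∏ R ∈ runsOf S, f R) * f (Icc (n + 2) (n + 1 + k)) := by
  rcases Nat.eq_zero_or_pos k with rfl | hk
  · simp [hf]
  have h1 : ∀ j ∈ S, runOf (S ∪ Icc (n + 2) (n + 1 + k)) j = runOf S j := by
    intro j hj
    have hjn := hS j hj
    ext x
    simp only [runOf, mem_filter, mem_Icc, mem_union]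
    constructor
    · rintro ⟨hx, h⟩
      have hxS : x ∈ S := by
        rcases hx with hx | hx
        · exact hx
        -- Otherwise `n + 1` lies between `j` and `x`, but it is in neither part.
        · have := h (n + 1) (by omega)
          rcases this with h' | h'
          · have := hS _ h'
            omega
          · omega
      refine ⟨hxS, fun y hy => ?_⟩
      have hxn := hS x hxS
      rcases h y hy with h' | h'
      · exact h'
      · omega
    · rintro ⟨hx, h⟩
      exact ⟨Or.inl hx, fun y hy => Or.inl (h y hy)⟩
  have h2 : ∀ j ∈ Icc (n + 2) (n + 1 + k),
      runOf (S ∪ Icc (n + 2) (n + 1 + k)) j = Icc (n + 2) (n + 1 + k) := by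
    intro j hj
    rw [mem_Icc] at hj
    ext x
    simp only [runOf, mem_filter, mem_Icc, mem_union]
    constructor
    · rintro ⟨hx, h⟩
      rcases hx with hx | hx
      · have hxn := hS x hx
        rcases h (n + 1) (by omega) with h' | h'
        · have := hS _ h'
          omega
        · omega
      · exact hx
    · intro hx
      exact ⟨Or.inr hx, fun y hy => Or.inr (by omega)⟩
  have hruns : runsOf (S ∪ Icc (n + 2) (n + 1 + k)) =
      insert (Icc (n + 2) (n + 1 + k)) (runsOf S) := by
    have hne : (Icc (n + 2) (n + 1 + k)).Nonempty := ⟨n + 2, by rw [mem_Icc]; omega⟩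
    rw [runsOf, image_union, image_congr h1, image_congr (g := fun _ => Icc (n + 2) (n + 1 + k)) h2,
      image_const hne, union_comm, ← insert_eq]
    rfl
  rw [hruns, prod_insert, mul_comm]
  intro hmem
  obtain ⟨j, hj, he⟩ := mem_image.1 hmem
  have := mem_runOf_self hj
  rw [he, mem_Icc] at this
  have := hS j hj
  omega

/-! ### The entries as products over runs -/

/-- The absolute value of the entry of the inverse in row `S` and column `T ⊆ S`, as a product over
the runs of `S`. The default `0` for the maximum is never used, since runs are nonempty. -/
def F (S T : Finset ℕ) : ℚ :=
  ∏ R ∈ runsOf S, ((1 : ℚ) / (Nat.factorial (R.card + 1)) *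
    ∏ i ∈ R ∩ T, ((R.max.getD 0 - i + 1 : ℕ) : ℚ))

/-- Adding an element `j` of `S` to the column set multiplies the entry by the number of elements of
the run of `j` that are at least `j`. -/
lemma F_insert (S T : Finset ℕ) (j : ℕ) (hj : j ∈ S) (hjT : j ∉ T) :
    F S (insert j T) = (((runOf S j).max.getD 0 - j + 1 : ℕ) : ℚ) * F S T := by
  unfold F
  rw [prod_mul_distrib, prod_mul_distrib,
    prod_runs S (insert j T) (fun R i => ((R.max.getD 0 - i + 1 : ℕ) : ℚ)),
    prod_runs S T (fun R i => ((R.max.getD 0 - i + 1 : ℕ) : ℚ)),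
    inter_insert_of_mem hj, prod_insert (by simp [hjT])]
  ring

/-- The run through `n+1` reaches the top of the block `{n+1, …, n+1+k}`; how far it extends
downwards into `S` is irrelevant. -/
lemma max_runOf_top (S : Finset ℕ) (n k : ℕ) (hS : ∀ x ∈ S, x ≤ n) :
    (runOf (S ∪ Icc (n + 1) (n + 1 + k)) (n + 1)).max.getD 0 = n + 1 + k := by
  have hmax : (runOf (S ∪ Icc (n + 1) (n + 1 + k)) (n + 1)).max = ((n + 1 + k : ℕ) : WithBot ℕ) := by
    apply le_antisymm
    · refine Finset.max_le fun x hx => ?_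
      have hx' := (mem_filter.1 hx).1
      rw [mem_union, mem_Icc] at hx'
      refine WithBot.coe_le_coe.2 (show x ≤ n + 1 + k from ?_)
      rcases hx' with h | h
      · have := hS x h
        omega
      · omega
    · refine Finset.le_max (a := n + 1 + k) ?_
      simp only [runOf, mem_filter, mem_union, mem_Icc]
      exact ⟨by omega, fun y hy => by omega⟩
  rw [hmax]
  rfl

lemma F_union (S T : Finset ℕ) (n k : ℕ) (hS : ∀ x ∈ S, x ≤ n) (hT : ∀ x ∈ T, x ≤ n) :
    F (S ∪ Icc (n + 2) (n + 1 + k)) T = F S T / (Nat.factorial (k + 1)) := by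
  unfold F
  rw [prod_runs_union S n k hS _ (by simp)]
  have : Icc (n + 2) (n + 1 + k) ∩ T = ∅ := by
    ext x
    simp only [mem_inter, mem_Icc, notMem_empty, iff_false, not_and]
    intro h hx
    have := hT x hx
    omega
  rw [this]
  have hc : (Icc (n + 2) (n + 1 + k)).card = k := by simp
  rw [hc, prod_empty]
  ring

lemma natSet_union_Icc {n : ℕ} (k : ℕ) (I : Finset (Fin n)) :
    natSet (con true I) ∪ Icc (n + 1 + 1) (n + 1 + k) =
      natSet I ∪ Icc (n + 1) (n + (k + 1)) := by
  rw [natSet_con]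
  ext x
  simp only [mem_union, mem_Icc, if_true, mem_singleton, or_assoc]
  refine or_congr_right ?_
  omega

/-- Product formula for the entries: the parameter `k` records a block of `k` consecutive elements lying directly above `[n]`. -/
lemma V_eq_F (n k : ℕ) (I J : Finset (Fin n)) (h : J ⊆ I) :
    V n k I J = (-1) ^ J.card * (k.factorial * F (natSet I ∪ Icc (n + 1) (n + k)) (natSet J)) := by
  induction n generalizing k with
  | zero =>
    -- Only the block `{1, …, k}` is left: a single run, or nothing if `k = 0`.
    have hF : F (∅ ∪ Icc (0 + 1) (0 + k)) ∅ = 1 / (k + 1).factorial := by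
      rcases k with _ | k
      · simp [F, runsOf]
      have hr : ∀ j ∈ Icc (0 + 1) (0 + (k + 1)),
          runOf (Icc (0 + 1) (0 + (k + 1))) j = Icc (0 + 1) (0 + (k + 1)) := by
        intro j hj
        ext x
        simp only [runOf, mem_filter, mem_Icc] at hj ⊢
        exact ⟨fun h => h.1, fun h => ⟨h, fun y hy => by omega⟩⟩
      rw [empty_union, F, runsOf, image_congr (g := fun _ => Icc (0 + 1) (0 + (k + 1))) hr,
        image_const ⟨1, by simp⟩]
      simp
    rw [natSet_fin_zero, natSet_fin_zero, hF]
    have := Nat.factorial_ne_zero k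
    have hk := cast_succ_ne k
    simp [V, Finset.eq_empty_of_isEmpty J, Nat.factorial_succ]
    field_simp
  | succ n ih =>
    obtain ⟨b, I, rfl⟩ := exists_con I
    obtain ⟨c, J, rfl⟩ := exists_con J
    rw [con_subset] at h
    have h0 := ih 0 I J h.2
    have h1 := ih (k + 1) I J h.2
    have hk := cast_succ_ne k
    have hfac := Nat.factorial_ne_zero k
    rw [V_con, card_con]
    cases b <;> cases c
    · have hu := F_union (natSet I) (natSet J) n k (fun _ => le_of_mem_natSet)
        (fun _ => le_of_mem_natSet)
      simp only [natSet_con, Bool.false_eq_true, if_false, union_empty, add_zero]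
      rw [show n + 1 + 1 = n + 2 from rfl, hu, h0]
      simp [Nat.factorial_succ]
      field_simp
    · simp at h
    · rw [natSet_union_Icc, natSet_con]
      simp only [Bool.false_eq_true, if_false, if_true, union_empty, add_zero]
      rw [h1]
      simp [Nat.factorial_succ]
      field_simp
    · rw [natSet_union_Icc, natSet_con]
      simp only [if_true]
      rw [union_comm (natSet J), ← insert_eq, F_insert, show n + (k + 1) = n + 1 + k by ring,
        max_runOf_top _ _ _ (fun _ => le_of_mem_natSet),
        show n + 1 + k - (n + 1) + 1 = k + 1 by omega, h1,
        show n + (k + 1) = n + 1 + k by ring]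
      · simp [Nat.factorial_succ, pow_succ]
        ring
      · simp
      · intro hmem
        have := le_of_mem_natSet hmem
        omega

/-- For a full run `R` the factors `max R - i + 1` multiply to `|R|!`; the recursion gives the
resulting `1 / (|R| + 1)` without evaluating that product. -/
lemma V_diag (n k : ℕ) (I : Finset (Fin n)) :
    V n k I I = (-1) ^ I.card *
      ∏ R ∈ runsOf (natSet I ∪ Icc (n + 1) (n + k)), (1 : ℚ) / (R.card + 1) := by
  induction n generalizing k with
  | zero =>
    rcases k with _ | k
    · simp [V, natSet_fin_zero, runsOf, Finset.eq_empty_of_isEmpty I]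
    have hr : ∀ j ∈ Icc (0 + 1) (0 + (k + 1)),
        runOf (Icc (0 + 1) (0 + (k + 1))) j = Icc (0 + 1) (0 + (k + 1)) := by
      intro j hj
      ext x
      simp only [runOf, mem_filter, mem_Icc] at hj ⊢
      exact ⟨fun h => h.1, fun h => ⟨h, fun y hy => by omega⟩⟩
    rw [natSet_fin_zero, empty_union, runsOf,
      image_congr (g := fun _ => Icc (0 + 1) (0 + (k + 1))) hr, image_const ⟨1, by simp⟩]
    simp [V, Finset.eq_empty_of_isEmpty I]
  | succ n ih =>
    obtain ⟨b, I, rfl⟩ := exists_con I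
    have h0 := ih 0 I
    have h1 := ih (k + 1) I
    rw [V_con, card_con]
    cases b
    · have hu := prod_runs_union (natSet I) n k (fun _ => le_of_mem_natSet)
        (fun R => (1 : ℚ) / (R.card + 1)) (by simp)
      simp only [natSet_con, Bool.false_eq_true, if_false, union_empty, add_zero]
      rw [show n + 1 + 1 = n + 2 from rfl, hu, h0]
      simp [div_eq_mul_inv]
      ring
    · rw [natSet_union_Icc]
      simp only [if_true]
      rw [h1]
      ring

/-- The rational matrix `AM_n = A_n · M_n` is invertible, the
`(I,J)` entry of its inverse is nonzero iff `J ⊆ I`, and for `J ⊆ I` it equals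
`(−1)^{|J|} ∏_k (1/(|I_k|+1)!) ∏_{i ∈ I_k ∩ J} (max I_k − i + 1)` over the runs
`I_k` of `I`. Moreover: (i) each nonzero entry is, up to sign, the reciprocal of a
positive integer; (ii) each row has sum of absolute values `1`; (iii) the first
entry of row `I` is `∏_k 1/(|I_k|+1)!` and divides every nonzero entry of the row,
and the diagonal entry is `(−1)^{|I|} ∏_k 1/(|I_k|+1)` and is divisible by every
nonzero entry of the row (a rational `r` divides `s` when `s/r` is an integer,
i.e. `s = z·r` for some `z : ℤ`). -/
theorem AM_inverse (n : ℕ)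
    (AMQ : Matrix (Finset (Fin n)) (Finset (Fin n)) ℚ)
    (hAMQ : AMQ = (Amat n * Mobmat n).map (Int.cast : ℤ → ℚ)) :
    IsUnit AMQ.det ∧
    (∀ I J : Finset (Fin n), AMQ⁻¹ I J ≠ 0 ↔ J ⊆ I) ∧
    (∀ I J : Finset (Fin n), J ⊆ I →
      AMQ⁻¹ I J = (-1) ^ J.card *
        ∏ R ∈ runsOf (natSet I),
          ((1 : ℚ) / (Nat.factorial (R.card + 1)) *
            ∏ i ∈ R ∩ natSet J, ((R.max.getD 0 - i + 1 : ℕ) : ℚ))) ∧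
    (∀ I J : Finset (Fin n), AMQ⁻¹ I J ≠ 0 →
      ∃ m : ℕ, 0 < m ∧ |AMQ⁻¹ I J| = 1 / (m : ℚ)) ∧
    (∀ I : Finset (Fin n), (∑ J : Finset (Fin n), |AMQ⁻¹ I J|) = 1) ∧
    (∀ I : Finset (Fin n),
      AMQ⁻¹ I ∅ = (∏ R ∈ runsOf (natSet I), (1 : ℚ) / (Nat.factorial (R.card + 1))) ∧
      AMQ⁻¹ I I = (-1) ^ I.card * (∏ R ∈ runsOf (natSet I), (1 : ℚ) / (R.card + 1)) ∧
      (∀ J : Finset (Fin n), AMQ⁻¹ I J ≠ 0 →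
        (∃ z : ℤ, AMQ⁻¹ I J = z * AMQ⁻¹ I ∅) ∧
        (∃ z : ℤ, AMQ⁻¹ I I = z * AMQ⁻¹ I J))) := by
  have hW : AMQ = W n 0 := by
    ext I J
    simp [hAMQ, W]
  have hmul : V n 0 * AMQ = 1 := by rw [hW, V_mul_W]
  have hinv : AMQ⁻¹ = V n 0 := Matrix.inv_eq_left_inv hmul
  have hform : ∀ I J : Finset (Fin n), J ⊆ I →
      V n 0 I J = (-1) ^ J.card * F (natSet I) (natSet J) := by
    intro I J h
    simpa using V_eq_F n 0 I J h
  rw [hinv]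
  refine ⟨Matrix.isUnit_det_of_left_inverse hmul, V_ne_zero_iff n 0, hform,
    fun I J h => abs_V n 0 I J ((V_ne_zero_iff n 0 I J).1 h),
    fun I => by simpa using sum_abs_V n 0 I, fun I => ⟨?_, ?_, fun J hJ => ?_⟩⟩
  · rw [hform I ∅ (empty_subset _)]
    simp [F, natSet]
  · simpa using V_diag n 0 I
  · have hJ' := (V_ne_zero_iff n 0 I J).1 hJ
    exact ⟨V_dvd_first n 0 I J hJ', V_diag_dvd n 0 I J hJ'⟩
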